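/- Let Φ = A_{n−1}, let I, J ⊆ Δ, and let λ̄ be a dominant integral weight with Φ_{λ̄} = Φ_J. Then there exists a Φ_I-regular weight μ such that λ ⟷ μ for every Φ_I-regular weight λ ∈ Wλ̄. -/

import Mathlib

namespace JantzenBlocksA

open scoped Classical

/-- The weight space `ℝ^n`. -/
abbrev V (n : ℕ) := Fin n → ℝ

noncomputable section

/-- The standard inner product on `ℝ^n`. -/
def inn {n : ℕ} (x y : V n) : ℝ := ∑ i, x i * y i

/-- The standard basis vector `e i`. -/
def ee {n : ℕ} (i : Fin n) : V n := Pi.single i 1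

/-- The reflection `s_v` in the vector `v`. -/
def sRefl {n : ℕ} (v x : V n) : V n := x - (2 * inn x v / inn v v) • v

/-- The root system `Φ = A_{n-1} = {e_i - e_j : i ≠ j}`. -/
def PhiA (n : ℕ) : Set (V n) := {v | ∃ i j : Fin n, i ≠ j ∧ v = ee i - ee j}

/-- The positive system `Φ⁺ = {e_i - e_j : i < j}`. -/
def PhiAPos (n : ℕ) : Set (V n) := {v | ∃ i j : Fin n, i < j ∧ v = ee i - ee j}

/-- The simple root `α_{i+1} = e_{i+1} - e_{i+2}` (`0`-based index `i < n-1`). -/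
def alphaA (n : ℕ) (i : Fin n) : V n :=
  if h : i.1 + 1 < n then ee i - ee ⟨i.1 + 1, h⟩ else 0

/-- The subsystem `Φ_I` generated by the simple roots indexed by `I`. -/
def PhiI (n : ℕ) (I : Finset (Fin n)) : Set (V n) :=
  PhiA n ∩ (Submodule.span ℝ (alphaA n '' (I : Set (Fin n))) : Set (V n))

/-- `λ` is `Φ_I`-regular. -/
def RegI (n : ℕ) (I : Finset (Fin n)) (lam : V n) : Prop :=
  ∀ β ∈ PhiI n I, inn lam β ≠ 0

/-- `λ` is integral. -/
def IntegralW (n : ℕ) (lam : V n) : Prop :=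
  ∀ β ∈ PhiA n, ∃ k : ℤ, 2 * inn lam β / inn β β = (k : ℝ)

/-- `λ` is dominant. -/
def DominantW (n : ℕ) (lam : V n) : Prop :=
  ∀ i : Fin n, 0 ≤ inn lam (alphaA n i)

/-- `μ` lies in the `W_I`-orbit of `λ`. -/
def WIOrb (n : ℕ) (I : Finset (Fin n)) : V n → V n → Prop :=
  Relation.ReflTransGen (fun x y => ∃ i ∈ I, y = sRefl (alphaA n i) x)

/-- `μ` lies in the `W`-orbit of `λ`. -/
def WOrb (n : ℕ) : V n → V n → Prop := WIOrb n Finset.univ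

/-- `λ ∈ Λ_I⁺`. -/
def LamIPlus (n : ℕ) (I : Finset (Fin n)) (lam : V n) : Prop :=
  IntegralW n lam ∧ ∀ i ∈ I, 0 < inn lam (alphaA n i)

/-- The sorted list `q_1 < … < q_{m-1}` (`1`-based values) of indices of `Δ∖I`. -/
def QlistA (n : ℕ) (I : Finset (Fin n)) : List ℕ :=
  (((Finset.univ.filter (fun j : Fin n => j.1 + 1 < n)) \ I).sort (· ≤ ·)).map
    (fun j => j.1 + 1)

/-- The number `m` of segments determined by `I`. -/
def mvalA (n : ℕ) (I : Finset (Fin n)) : ℕ := (QlistA n I).length + 1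

/-- `q_s`, with the conventions `q_0 = 0` and `q_m = n`. -/
def qA (n : ℕ) (I : Finset (Fin n)) (s : ℕ) : ℕ :=
  if s = 0 then 0 else if s < mvalA n I then (QlistA n I).getD (s - 1) 0 else n

/-- The multiplicity `n̄_t` of the `t`-th distinct value of a dominant weight. -/
def nbarA (n : ℕ) (J : Finset (Fin n)) (t : ℕ) : ℕ := qA n J t - qA n J (t - 1)

/-- `a_t = λ̄_{q̄_t}`: the `t`-th distinct entry value of the dominant weight `λ̄`. -/
def aA (n : ℕ) (J : Finset (Fin n)) (lbar : V n) (t : ℕ) : ℝ :=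
  if h : qA n J t - 1 < n then lbar ⟨qA n J t - 1, h⟩ else 0

/-- `β` is a linked root of `λ` (type `A`: no exceptional cases). -/
def LinkedA (n : ℕ) (I : Finset (Fin n)) (lam β : V n) : Prop :=
  RegI n I lam ∧ β ∈ PhiAPos n ∧ β ∉ PhiI n I ∧
  RegI n I (sRefl β lam) ∧ sRefl β lam ≠ lam

/-- One step in a connecting chain. -/
def ConnStepA (n : ℕ) (I : Finset (Fin n)) (x y : V n) : Prop :=
  RegI n I x ∧ RegI n I y ∧
  (WIOrb n I x y ∨ ∃ β : V n, LinkedA n I x β ∧ WIOrb n I (sRefl β x) y)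

/-- `λ ⟷ μ`: `λ` and `μ` are connected. -/
def ConnA (n : ℕ) (I : Finset (Fin n)) (lam mu : V n) : Prop :=
  RegI n I lam ∧ RegI n I mu ∧ Relation.ReflTransGen (ConnStepA n I) lam mu

/-- The set `^IW^Jλ̄ = Wλ̄ ∩ Λ_I⁺`. -/
def IWJsetA (n : ℕ) (I : Finset (Fin n)) (lbar : V n) : Set (V n) :=
  {mu | WOrb n lbar mu ∧ LamIPlus n I mu}

end

/-!
Cut `{1, …, n}` into the segments determined by `I`. A root `e_i - e_j` lies in `Φ_I` exactly when
`i` and `j` lie in the same segment, so a weight is `Φ_I`-regular iff its entries are distinct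
within every segment, and any transposition of entries leading from one regular weight to another
is a connecting step. It remains to see that two regular rearrangements `x`, `y` of the same
entries are joined by transpositions through regular weights. This is Ryser's interchange theorem
for the 0-1 matrices recording which value occurs in which segment: at the first position `k` where
`x` and `y` disagree, a pigeonhole count of the values `x k` and `y k` shows that one of the two
weights can be corrected at `k` by a single transposition that keeps it regular. Since transposition
steps are reversible, it does not matter which one.
-/

section Interchange

open Equiv Relation

variable {ι β α : Type*}

/-- `x` takes distinct values on distinct points of each fibre ("block") of `b`. For `b` the
segment index this is `Φ_I`-regularity of the weight `x`. -/
def BlockInjective (b : ι → β) (x : ι → α) : Prop :=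
  ∀ ⦃i j⦄, b i = b j → x i = x j → i = j

variable {b : ι → β} {x y : ι → α}

lemma exists_mem_notMem_image_of_card_le {A C : Finset ι} (hb : Set.InjOn b C)
    (hcard : A.card ≤ C.card) {k : ι} (hkA : k ∈ A) (hkC : b k ∉ C.image b) :
    ∃ j ∈ C, b j ∉ A.image b := by
  by_contra! hC
  have hss : C.image b ⊂ A.image b := by
    rw [Finset.ssubset_iff_of_subset (Finset.image_subset_iff.2 hC)]
    exact ⟨b k, Finset.mem_image_of_mem b hkA, hkC⟩
  have hlt := Finset.card_lt_card hss
  rw [Finset.card_image_of_injOn hb] at hlt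
  exact (hlt.trans_le Finset.card_image_le).not_ge hcard

lemma card_filter_eq_of_map_val_eq {U : Finset ι} (h : U.val.map x = U.val.map y) (v : α) :
    (U.filter (x · = v)).card = (U.filter (y · = v)).card := by
  have hcount := congrArg (Multiset.count v) h
  simp only [Multiset.count_map, eq_comm (a := v)] at hcount
  exact hcount

section Swap

variable [DecidableEq ι]

/-- `y` arises from `x` by exchanging two entries, both being block-injective. The degenerate
exchange `y = x` is allowed. -/
def SwapStep (b : ι → β) (x y : ι → α) : Prop :=
  BlockInjective b x ∧ BlockInjective b y ∧ ∃ i j, y = x ∘ swap i j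

instance SwapStep.stdSymm : Std.Symm (SwapStep (α := α) b) where
  symm := by
    rintro x - ⟨hx, hy, i, j, rfl⟩
    exact ⟨hy, hx, i, j, by simp [Function.comp_assoc, ← Perm.coe_mul]⟩

lemma BlockInjective.comp_swap_of_eq (hx : BlockInjective b x) {i j : ι} (hij : b i = b j) :
    BlockInjective b (x ∘ swap i j) := by
  have b_swap (l : ι) : b (swap i j l) = b l := by
    rw [swap_apply_def]
    split_ifs <;> simp_all
  intro p q hb hpq
  exact (swap i j).injective (hx (by rw [b_swap, b_swap, hb]) hpq)

lemma BlockInjective.comp_swap_of_ne (hx : BlockInjective b x) {i j : ι}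
    (hi : ∀ l, b l = b i → x l ≠ x j) (hj : ∀ l, b l = b j → x l ≠ x i) :
    BlockInjective b (x ∘ swap i j) := by
  intro p q hb hpq
  simp only [Function.comp_apply, swap_apply_def] at hpq
  have := @hx p q
  split_ifs at hpq <;> grind

lemma eqOn_and_map_val_eq_of_swap {U : Finset ι} {k j : ι} (hk : k ∉ U) (hj : j ∈ insert k U)
    (hxj : x j = y k) (hagree : ∀ i ∉ insert k U, x i = y i)
    (hmap : (insert k U).val.map x = (insert k U).val.map y) :
    (∀ i ∉ U, (x ∘ swap k j) i = y i) ∧ U.val.map (x ∘ swap k j) = U.val.map y := by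
  have hxk : (x ∘ swap k j) k = y k := by simp [hxj]
  refine ⟨fun i hi => ?_, ?_⟩
  · obtain rfl | hik := eq_or_ne i k
    · exact hxk
    · have hiU : i ∉ insert k U := by simp [hik, hi]
      have hij : i ≠ j := fun h => hiU (h ▸ hj)
      rw [Function.comp_apply, swap_apply_of_ne_of_ne hik hij, hagree i hiU]
  · have hperm : (insert k U).map (swap k j).toEmbedding = insert k U :=
      Finset.map_perm fun i hi => by
        by_contra hiU
        exact hi (swap_apply_of_ne_of_ne (fun h => hiU (by simp [h])) fun h => hiU (h ▸ hj))
    have hmap' : (insert k U).val.map (x ∘ swap k j) = (insert k U).val.map y := by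
      rw [← hmap, ← Multiset.map_map]
      exact congrArg (fun s : Finset ι => s.val.map x) hperm
    rw [Finset.insert_val_of_notMem hk, Multiset.map_cons, Multiset.map_cons, hxk] at hmap'
    exact (Multiset.cons_inj_right _).1 hmap'

end Swap

section Monotone

variable [LinearOrder ι]

lemma exists_swap_of_mem_block (hx : BlockInjective b x) (hy : BlockInjective b y) {k l : ι}
    (hagree : ∀ i < k, x i = y i) (hlk : b l = b k) (hxl : x l = y k) :
    ∃ j ≥ k, x j = y k ∧ BlockInjective b (x ∘ swap k j) := by
  refine ⟨l, le_of_not_gt fun hlt => hlt.ne ?_, hxl, hx.comp_swap_of_eq hlk.symm⟩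
  exact hy hlk (by rw [← hagree l hlt, hxl])

variable [PartialOrder β]

lemma exists_swap_of_card_le (hb : Monotone b) (hx : BlockInjective b x) {U : Finset ι} {k : ι}
    (hU : ∀ i, i ∈ U ↔ k ≤ i) {c : α} (hc : ∀ l, b l = b k → x l ≠ c)
    (hcard : (U.filter (x · = x k)).card ≤ (U.filter (x · = c)).card) :
    ∃ j ∈ U, x j = c ∧ BlockInjective b (x ∘ swap k j) := by
  obtain ⟨j, hj, hjA⟩ : ∃ j ∈ U.filter (x · = c), b j ∉ (U.filter (x · = x k)).image b := by
    refine exists_mem_notMem_image_of_card_le (k := k) ?_ hcard (by simp [hU]) ?_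
    · intro p hp q hq hpq
      exact hx hpq ((Finset.mem_filter.1 hp).2.trans (Finset.mem_filter.1 hq).2.symm)
    · rw [Finset.mem_image]
      rintro ⟨l, hl, hlk⟩
      exact hc l hlk (Finset.mem_filter.1 hl).2
  obtain ⟨hjU, rfl⟩ := Finset.mem_filter.1 hj
  refine ⟨j, hjU, rfl, hx.comp_swap_of_ne hc fun l hlj hlk => ?_⟩
  obtain hkl | hlk' := le_or_gt k l
  · exact hjA (Finset.mem_image.2 ⟨l, by simp [hU, hkl, hlk], hlj⟩)
  · -- `l < k ≤ j` with `l` and `j` in one block would put `k` into that block as well.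
    have hjk : b j = b k := le_antisymm (hlj ▸ hb hlk'.le) (hb ((hU j).1 hjU))
    exact hc j hjk rfl

lemma exists_swap_or_exists_swap (hb : Monotone b) (hx : BlockInjective b x)
    (hy : BlockInjective b y) {U : Finset ι} {k : ι} (hU : ∀ i, i ∈ U ↔ k ≤ i)
    (hagree : ∀ i ∉ U, x i = y i) (hmap : U.val.map x = U.val.map y) :
    (∃ j ∈ U, x j = y k ∧ BlockInjective b (x ∘ swap k j)) ∨
      ∃ j ∈ U, y j = x k ∧ BlockInjective b (y ∘ swap k j) := by
  have hlt (i : ι) (hi : i < k) : x i = y i := hagree i (by simpa [hU] using hi)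
  by_cases hxblock : ∃ l, b l = b k ∧ x l = y k
  · obtain ⟨l, hlk, hxl⟩ := hxblock
    simpa only [hU] using Or.inl (exists_swap_of_mem_block hx hy hlt hlk hxl)
  by_cases hyblock : ∃ l, b l = b k ∧ y l = x k
  · obtain ⟨l, hlk, hyl⟩ := hyblock
    have hlt' (i : ι) (hi : i < k) : y i = x i := (hlt i hi).symm
    simpa only [hU] using Or.inr (exists_swap_of_mem_block hy hx hlt' hlk hyl)
  push Not at hxblock hyblock
  obtain hcard | hcard :=
    le_total (U.filter (x · = x k)).card (U.filter (x · = y k)).card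
  · exact .inl (exists_swap_of_card_le hb hx hU hxblock hcard)
  · rw [card_filter_eq_of_map_val_eq hmap, card_filter_eq_of_map_val_eq hmap] at hcard
    exact .inr (exists_swap_of_card_le hb hy hU hyblock hcard)

lemma reflTransGen_swapStep_of_eqOn_compl (hb : Monotone b) (U : Finset ι)
    (hU : IsUpperSet (U : Set ι)) (hx : BlockInjective b x) (hy : BlockInjective b y)
    (hagree : ∀ i ∉ U, x i = y i) (hmap : U.val.map x = U.val.map y) :
    ReflTransGen (SwapStep b) x y := by
  induction U using Finset.induction_on_min generalizing x y with
  | empty =>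
    obtain rfl : x = y := funext fun i => hagree i (Finset.notMem_empty i)
    exact .refl
  | insert k U hkU ih =>
    have hk : k ∉ U := fun h => (hkU k h).false
    have mem_insert_iff (i : ι) : i ∈ insert k U ↔ k ≤ i := by
      refine ⟨fun hi => ?_, fun hi => hU hi (Finset.mem_insert_self k U)⟩
      obtain rfl | hi := Finset.mem_insert.1 hi
      exacts [le_rfl, (hkU i hi).le]
    have hU' : IsUpperSet (U : Set ι) := fun i j hij hi =>
      Finset.mem_of_mem_insert_of_ne (hU hij (Finset.mem_insert_of_mem hi))
        ((hkU i hi).trans_le hij).ne'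
    have of_exists_swap {x y : ι → α} (hx : BlockInjective b x) (hy : BlockInjective b y)
        (hagree : ∀ i ∉ insert k U, x i = y i)
        (hmap : (insert k U).val.map x = (insert k U).val.map y)
        (hswap : ∃ j ∈ insert k U, x j = y k ∧ BlockInjective b (x ∘ swap k j)) :
        ReflTransGen (SwapStep b) x y := by
      obtain ⟨j, hj, hxj, hxswap⟩ := hswap
      obtain ⟨hagree', hmap'⟩ := eqOn_and_map_val_eq_of_swap hk hj hxj hagree hmap
      exact .head ⟨hx, hxswap, k, j, rfl⟩ (ih hU' hxswap hy hagree' hmap')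
    obtain hswap | hswap := exists_swap_or_exists_swap hb hx hy mem_insert_iff hagree hmap
    · exact of_exists_swap hx hy hagree hmap hswap
    · exact symm (of_exists_swap hy hx (fun i hi => (hagree i hi).symm) hmap.symm hswap)

theorem reflTransGen_swapStep_comp_perm [Finite ι] (hb : Monotone b) (σ : Perm ι)
    (hx : BlockInjective b x) (hxσ : BlockInjective b (x ∘ σ)) :
    ReflTransGen (SwapStep b) x (x ∘ σ) := by
  have := Fintype.ofFinite ι
  refine reflTransGen_swapStep_of_eqOn_compl hb Finset.univ (by simp [isUpperSet_univ]) hx hxσ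
    (by simp) ?_
  rw [← Multiset.map_map, Multiset.map_univ_val_equiv]

end Monotone

end Interchange

section SegmentIndex

open Relation

variable {ι : Type*} [LinearOrder ι] [LocallyFiniteOrderBot ι]

/-- The number of elements outside `I` below `i`. When `I` is a set of simple roots, each simple
root outside `I` ends a segment, so this is the `0`-based index of the segment containing `i`. -/
def segmentIndex (I : Finset ι) (i : ι) : ℕ := (Finset.Iio i \ I).card

variable (I : Finset ι)

lemma segmentIndex_mono : Monotone (segmentIndex I) := fun _ _ hij =>
  Finset.card_le_card (Finset.sdiff_subset_sdiff (Finset.Iio_subset_Iio hij) le_rfl)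

variable {I} {i j k : ι}

lemma segmentIndex_lt_of_notMem (hik : i ≤ k) (hkj : k < j) (hk : k ∉ I) :
    segmentIndex I i < segmentIndex I j := by
  refine Finset.card_lt_card ((Finset.ssubset_iff_of_subset ?_).2 ⟨k, ?_, ?_⟩)
  · exact Finset.sdiff_subset_sdiff (Finset.Iio_subset_Iio (hik.trans hkj.le)) le_rfl
  · simp [hkj, hk]
  · simp [hik]

lemma segmentIndex_eq_of_covBy (hij : i ⋖ j) (hi : i ∈ I) :
    segmentIndex I i = segmentIndex I j := by
  unfold segmentIndex
  congr 1
  ext l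
  simp only [Finset.mem_sdiff, Finset.mem_Iio, hij.lt_iff_le_left, le_iff_lt_or_eq]
  grind

lemma reflTransGen_covBy_of_segmentIndex_eq [SuccOrder ι] [IsSuccArchimedean ι] (hij : i ≤ j)
    (h : segmentIndex I i = segmentIndex I j) :
    ReflTransGen (fun p q => p ∈ I ∧ p ⋖ q) i j := by
  refine reflTransGen_of_succ_of_le _ (fun p hp => ⟨?_, ?_⟩) hij
  · by_contra hpI
    exact (segmentIndex_lt_of_notMem hp.1 hp.2 hpI).ne h
  · exact Order.covBy_succ_of_not_isMax hp.2.not_isMax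

end SegmentIndex

section TypeA

open Equiv Relation

variable {n : ℕ}

lemma inn_eq_dotProduct (x y : V n) : inn x y = x ⬝ᵥ y := rfl

lemma inn_ee_sub_ee (x : V n) (i j : Fin n) : inn x (ee i - ee j) = x i - x j := by
  simp [inn, ee, mul_sub, Pi.single_apply]

lemma sRefl_ee_sub_ee {i j : Fin n} (hij : i ≠ j) (x : V n) :
    sRefl (ee i - ee j) x = x ∘ swap i j := by
  have hnorm : inn (ee i - ee j) (ee i - ee j : V n) = 2 := by
    rw [inn_ee_sub_ee]
    simp [ee, hij, hij.symm, one_add_one_eq_two]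
  funext k
  rw [sRefl, hnorm, inn_ee_sub_ee]
  simp only [Function.comp_apply, swap_apply_def, Pi.sub_apply, Pi.smul_apply, smul_eq_mul, ee,
    Pi.single_apply]
  split_ifs <;> simp_all

lemma alphaA_of_covBy {i j : Fin n} (hij : i ⋖ j) : alphaA n i = ee i - ee j := by
  have hj : i.1 + 1 = j.1 := Nat.covBy_iff_add_one_eq.1 (Fin.covBy_iff.1 hij)
  have hlt : i.1 + 1 < n := hj ▸ j.2
  rw [alphaA, dif_pos hlt]
  congr 2
  exact Fin.ext hj

lemma alphaA_eq_zero_or_exists_covBy (i : Fin n) :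
    alphaA n i = 0 ∨ ∃ j, i ⋖ j ∧ alphaA n i = ee i - ee j := by
  by_cases hi : i.1 + 1 < n
  · have hcov : i ⋖ ⟨i.1 + 1, hi⟩ := Fin.covBy_iff.2 (Nat.covBy_iff_add_one_eq.2 rfl)
    exact .inr ⟨_, hcov, alphaA_of_covBy hcov⟩
  · exact .inl (dif_neg hi)

lemma exists_perm_of_wIOrb {I : Finset (Fin n)} {x y : V n} (h : WIOrb n I x y) :
    ∃ σ : Perm (Fin n), y = x ∘ σ := by
  induction h with
  | refl => exact ⟨1, rfl⟩
  | tail _ hstep ih =>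
    obtain ⟨i, -, rfl⟩ := hstep
    obtain ⟨σ, rfl⟩ := ih
    obtain hα | ⟨j, hij, hα⟩ := alphaA_eq_zero_or_exists_covBy i
    · exact ⟨σ, by simp [hα, sRefl]⟩
    · exact ⟨σ * swap i j, by rw [hα, sRefl_ee_sub_ee hij.lt.ne, Perm.coe_mul]; rfl⟩

variable (I : Finset (Fin n))

lemma inn_segmentIndex_eq_zero {v : V n}
    (hv : v ∈ Submodule.span ℝ (alphaA n '' (I : Set (Fin n)))) :
    inn (fun i => (segmentIndex I i : ℝ)) v = 0 := by
  induction hv using Submodule.span_induction with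
  | mem _ hv =>
    obtain ⟨i, hi, rfl⟩ := hv
    obtain hα | ⟨j, hij, hα⟩ := alphaA_eq_zero_or_exists_covBy i
    · simp [hα, inn]
    · rw [hα, inn_ee_sub_ee, segmentIndex_eq_of_covBy hij hi, sub_self]
  | zero => exact dotProduct_zero _
  | add v w _ _ hv hw =>
    rw [inn_eq_dotProduct] at hv hw ⊢
    rw [dotProduct_add, hv, hw, add_zero]
  | smul a v _ hv =>
    rw [inn_eq_dotProduct] at hv ⊢
    rw [dotProduct_smul, hv, smul_zero]

variable {I}

lemma ee_sub_ee_mem_span {i j : Fin n} (h : segmentIndex I i = segmentIndex I j) :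
    (ee i - ee j : V n) ∈ Submodule.span ℝ (alphaA n '' (I : Set (Fin n))) := by
  wlog hij : i ≤ j generalizing i j
  · rw [← neg_sub]
    exact neg_mem (this h.symm (le_of_not_ge hij))
  have hchain := reflTransGen_covBy_of_segmentIndex_eq hij h
  clear hij h
  induction hchain with
  | refl => simp
  | @tail p q _ hpq ih =>
    rw [← sub_add_sub_cancel _ (ee p), ← alphaA_of_covBy hpq.2]
    exact add_mem ih (Submodule.subset_span ⟨p, hpq.1, rfl⟩)

lemma ee_sub_ee_mem_PhiI {i j : Fin n} (hij : i ≠ j) :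
    (ee i - ee j : V n) ∈ PhiI n I ↔ segmentIndex I i = segmentIndex I j := by
  refine ⟨fun h => ?_, fun h => ⟨⟨i, j, hij, rfl⟩, ee_sub_ee_mem_span h⟩⟩
  have hzero := inn_segmentIndex_eq_zero I h.2
  rwa [inn_ee_sub_ee, sub_eq_zero, Nat.cast_inj] at hzero

lemma regI_iff_blockInjective {x : V n} : RegI n I x ↔ BlockInjective (segmentIndex I) x := by
  constructor
  · intro h i j hseg hx
    by_contra hij
    exact h _ ((ee_sub_ee_mem_PhiI hij).2 hseg) (by rw [inn_ee_sub_ee, hx, sub_self])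
  · rintro h β hβ
    obtain ⟨i, j, hij, rfl⟩ := hβ.1
    rw [inn_ee_sub_ee, sub_ne_zero]
    exact fun hx => hij (h ((ee_sub_ee_mem_PhiI hij).1 hβ) hx)

lemma regI_of_injective {x : V n} (hx : Function.Injective x) : RegI n I x :=
  regI_iff_blockInjective.2 fun _ _ _ h => hx h

variable (I) in
/-- The permutations of the coordinates that are realised on every weight by products of the
simple reflections in `I`, i.e. the parabolic subgroup `W_I` acting by place permutations. -/
def wIPerms : Submonoid (Perm (Fin n)) where
  carrier := {σ | ∀ x : V n, WIOrb n I x (x ∘ σ)}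
  one_mem' _ := .refl
  mul_mem' hσ hτ x := (hσ x).trans (hτ (x ∘ _))

lemma swap_mem_wIPerms {i j : Fin n} (hij : i ≤ j) (h : segmentIndex I i = segmentIndex I j) :
    swap i j ∈ wIPerms I := by
  have hchain := reflTransGen_covBy_of_segmentIndex_eq hij h
  clear hij h
  induction hchain with
  | refl => exact swap_self i ▸ one_mem _
  | @tail p q _ hpq ih =>
    have hadj : swap p q ∈ wIPerms I := fun x =>
      .single ⟨p, hpq.1, by rw [alphaA_of_covBy hpq.2, sRefl_ee_sub_ee hpq.2.lt.ne]⟩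
    exact SubmonoidClass.swap_mem_trans _ ih hadj

lemma connStepA_comp_swap {x : V n} {i j : Fin n} (hij : i < j) (hx : RegI n I x)
    (hy : RegI n I (x ∘ swap i j)) (hne : x ∘ swap i j ≠ x) :
    ConnStepA n I x (x ∘ swap i j) := by
  refine ⟨hx, hy, ?_⟩
  by_cases hseg : segmentIndex I i = segmentIndex I j
  · exact .inl (swap_mem_wIPerms hij.le hseg x)
  · rw [← sRefl_ee_sub_ee hij.ne] at hy hne ⊢
    exact .inr ⟨_, ⟨hx, ⟨i, j, hij, rfl⟩, mt (ee_sub_ee_mem_PhiI hij.ne).1 hseg, hy, hne⟩, .refl⟩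

lemma reflTransGen_connStepA_of_swapStep {x y : V n} (h : SwapStep (segmentIndex I) x y) :
    ReflTransGen (ConnStepA n I) x y := by
  obtain ⟨hx, hy, i, j, rfl⟩ := h
  rw [← regI_iff_blockInjective] at hx hy
  by_cases hne : x ∘ swap i j = x
  · exact hne.symm ▸ .refl
  obtain hij | rfl | hji := lt_trichotomy i j
  · exact .single (connStepA_comp_swap hij hx hy hne)
  · simp at hne
  · rw [swap_comm] at hy hne ⊢
    exact .single (connStepA_comp_swap hji hx hy hne)

theorem connA_comp_perm {x : V n} (σ : Perm (Fin n)) (hx : RegI n I x) (hxσ : RegI n I (x ∘ σ)) :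
    ConnA n I x (x ∘ σ) := by
  refine ⟨hx, hxσ, ?_⟩
  rw [regI_iff_blockInjective] at hx hxσ
  have hswaps := reflTransGen_swapStep_comp_perm (segmentIndex_mono I) σ hx hxσ
  exact reflTransGen_closed (fun _ _ => reflTransGen_connStepA_of_swapStep) _ _ hswaps

theorem connA_of_wOrb {lbar lam mu : V n} (hlam : WOrb n lbar lam) (hmu : WOrb n lbar mu)
    (hlamreg : RegI n I lam) (hmureg : RegI n I mu) : ConnA n I lam mu := by
  obtain ⟨σ, rfl⟩ := exists_perm_of_wIOrb hlam
  obtain ⟨τ, rfl⟩ := exists_perm_of_wIOrb hmu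
  have hτ : lbar ∘ τ = (lbar ∘ σ) ∘ (σ⁻¹ * τ : Perm (Fin n)) := by
    funext i
    simp
  rw [hτ] at hmureg ⊢
  exact connA_comp_perm _ hlamreg hmureg

end TypeA

theorem statement13_general (n : ℕ) (I : Finset (Fin n)) (lbar : V n)
    (_hIidx : ∀ i ∈ I, i.1 + 1 < n) :
    ∃ mu : V n, RegI n I mu ∧
      ∀ lam : V n, WOrb n lbar lam → RegI n I lam → ConnA n I lam mu := by
  by_cases h : ∃ mu, WOrb n lbar mu ∧ RegI n I mu
  · obtain ⟨mu, hmu, hmureg⟩ := h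
    exact ⟨mu, hmureg, fun lam hlam hlamreg => connA_of_wOrb hlam hmu hlamreg hmureg⟩
  · push Not at h
    have hinj : Function.Injective fun i : Fin n => (i.1 : ℝ) :=
      Nat.cast_injective.comp Fin.val_injective
    exact ⟨_, regI_of_injective hinj, fun lam hlam hlamreg => absurd hlamreg (h lam hlam)⟩

/-- Lemma 6.11 / `bkswlem2`. -/
theorem statement13 (n : ℕ) (I J : Finset (Fin n)) (lbar : V n)
    (hIidx : ∀ i ∈ I, i.1 + 1 < n) (hJidx : ∀ j ∈ J, j.1 + 1 < n)
    (hint : IntegralW n lbar) (hdom : DominantW n lbar)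
    (hJ : ∀ i : Fin n, i.1 + 1 < n → (i ∈ J ↔ inn lbar (alphaA n i) = 0)) :
    ∃ mu : V n, RegI n I mu ∧
      ∀ lam : V n, WOrb n lbar lam → RegI n I lam → ConnA n I lam mu := by
  exact statement13_general n I lbar hIidx

end JantzenBlocksA
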